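/- Let T ∈ 𝓔^ω be orientation-preserving with T(π(0)) = π(0). Having no supercritical value is an open property in 𝓒^1: if f_n → f_0 in the C^1 topology and each f_n has a supercritical value, then f_0 has a supercritical value. -/

import Mathlib

/-!
`f` has a supercritical value if and only if there are two backward orbits `(y_n)` and `(z_n)` of
`T` in `K(f,T)` with `y_0 = z_0`, `y_1 ≠ z_1` and
`∑ f'(y_n) / (T^n)'(y_n) = ∑ f'(z_n) / (T^n)'(z_n)`. Each of these conditions is closed jointly in
`f` and the pair of orbits, and the pair ranges over a compact space, so the set of all such `f` is
closed.

That `z ∈ K(f,T)` is a closed condition on `(f, z)` comes from a compactness argument. Comparing a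
calibrated sub-action along a calibrated backward orbit of one point and its shadow from another
point bounds its Lipschitz constant by a constant depending continuously on `f`. After subtracting
a constant and rescaling, all calibrated sub-actions thus range over one compact set, and
`β(f,T)` is continuous in `f`. That `y_1 ≠ z_1` is a closed condition follows from the local
injectivity of `T`, and the series depend continuously on `f` and the orbits because the expansion
of `T` dominates them by a geometric series.
-/

open MeasureTheory Topology Filter Set
open scoped UniformConvergence

noncomputable section

/-- The circle `ℝ/ℤ`. -/
abbrev Circle1 : Type := AddCircle (1 : ℝ)

/-- The canonical representative in `[0,1)` of a point of `ℝ/ℤ`. -/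
noncomputable def rep (z : Circle1) : ℝ := (AddCircle.equivIco 1 0 z : ℝ)

/-- The circle map induced by a lift `F : ℝ → ℝ`. -/
noncomputable def cmap (F : ℝ → ℝ) : Circle1 → Circle1 := fun z => ((F (rep z) : ℝ) : Circle1)

/-- The data determining the `C^r` topology: all derivatives of order `≤ r`, viewed in the
space of functions `ℝ → ℝ` with the uniform-convergence topology. -/
noncomputable def crSeq (r : ℕ∞) (f : ℝ → ℝ) : ℕ → (ℝ →ᵤ ℝ) :=
  fun k => UniformFun.ofFun (if (k : ℕ∞) ≤ r then iteratedDeriv k f else 0)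

/-- The space `𝓒^r` of `C^r` functions `ℝ/ℤ → ℝ`. -/
def CrFun (r : ℕ∞) : Type := {f : Circle1 → ℝ // ContDiff ℝ r fun x : ℝ => f ↑x}

/-- The `C^r` topology on `𝓒^r`. -/
noncomputable instance (r : ℕ∞) : TopologicalSpace (CrFun r) :=
  TopologicalSpace.induced (fun f : CrFun r => crSeq r fun x : ℝ => f.1 ↑x) inferInstance

/-- `F : ℝ → ℝ` is a lift of a `C^r` expanding circle map: it is `C^r`, sends `x+1` to
`F x + d` for a fixed integer `d`, and `|(Fⁿ)'| ≥ C λⁿ` for some `C > 0`, `λ > 1`. -/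
def ExpandingLift (r : ℕ∞) (F : ℝ → ℝ) : Prop :=
  ContDiff ℝ r F ∧ (∃ d : ℤ, ∀ x : ℝ, F (x + 1) = F x + d) ∧
    ∃ C > (0 : ℝ), ∃ l > (1 : ℝ), ∀ n : ℕ, 1 ≤ n → ∀ x : ℝ, C * l ^ n ≤ |deriv (F^[n]) x|

/-- The space `𝓔^r` of (lifts of) `C^r` expanding circle maps, with the `C^r` topology. -/
def ExpMap (r : ℕ∞) : Type := {F : ℝ → ℝ // ExpandingLift r F}

noncomputable instance (r : ℕ∞) : TopologicalSpace (ExpMap r) :=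
  TopologicalSpace.induced (fun F : ExpMap r => crSeq r F.1) inferInstance

/-- `μ` is a `T`-invariant Borel probability measure. -/
def InvProb (T : Circle1 → Circle1) (μ : Measure Circle1) : Prop :=
  IsProbabilityMeasure μ ∧ μ.map T = μ

/-- `β(f,T)`, the maximal ergodic average. -/
noncomputable def beta (f : Circle1 → ℝ) (T : Circle1 → Circle1) : ℝ :=
  sSup ((fun μ : Measure Circle1 => ∫ x, f x ∂μ) '' {μ | InvProb T μ})

/-- `μ` is a maximizing measure for `(f,T)`. -/
def IsMaximizing (f : Circle1 → ℝ) (T : Circle1 → Circle1) (μ : Measure Circle1) : Prop :=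
  InvProb T μ ∧ ∫ x, f x ∂μ = beta f T

/-- `μ` is a periodic measure: an invariant measure supported on a periodic orbit. -/
def IsPeriodicMeasure (T : Circle1 → Circle1) (μ : Measure Circle1) : Prop :=
  InvProb T μ ∧ ∃ x : Circle1, ∃ n : ℕ, 0 < n ∧ T^[n] x = x ∧
    μ (Set.range fun k : ℕ => T^[k] x) = 1

/-- `(f,T)` is uniquely maximized by a periodic measure. -/
def UniqMaxPeriodic (f : Circle1 → ℝ) (T : Circle1 → Circle1) : Prop :=
  ∃ μ : Measure Circle1, IsMaximizing f T μ ∧ IsPeriodicMeasure T μ ∧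
    ∀ ν : Measure Circle1, IsMaximizing f T ν → ν = μ

/-- A (continuous) sub-action for `(f,T)`. -/
def IsSubaction (f : Circle1 → ℝ) (T : Circle1 → Circle1) (g : Circle1 → ℝ) : Prop :=
  Continuous g ∧ ∀ x, g x + f x ≤ g (T x) + beta f T

/-- A calibrated sub-action for `(f,T)`. -/
def IsCalibrated (f : Circle1 → ℝ) (T : Circle1 → Circle1) (g : Circle1 → ℝ) : Prop :=
  IsSubaction f T g ∧ ∀ x, ∃ y, T y = x ∧ g y + f y = g x + beta f T

/-- `G_{f,T}`: the set of Lipschitz calibrated sub-actions of `(f,T)`. -/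
def Gset (f : Circle1 → ℝ) (T : Circle1 → Circle1) : Set (Circle1 → ℝ) :=
  {g | (∃ K : NNReal, LipschitzWith K g) ∧ IsCalibrated f T g}

/-- The set `E_{f,T,g}`. -/
def Eset (f : Circle1 → ℝ) (T : Circle1 → Circle1) (g : Circle1 → ℝ) : Set Circle1 :=
  {x | g x + f x = g (T x) + beta f T}

/-- The set `Λ*_{f,T,g}`. -/
def LambdaStar (f : Circle1 → ℝ) (T : Circle1 → Circle1) (g : Circle1 → ℝ) : Set Circle1 :=
  {x | ∀ n : ℕ, T^[n] x ∈ Eset f T g}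

/-- The set `Λ_{f,T,g}`. -/
def Lambda (f : Circle1 → ℝ) (T : Circle1 → Circle1) (g : Circle1 → ℝ) : Set Circle1 :=
  ⋂ n : ℕ, T^[n] '' LambdaStar f T g

/-- The set `K(f,T)`. -/
def Kset (f : Circle1 → ℝ) (T : Circle1 → Circle1) : Set Circle1 :=
  ⋃ g ∈ Gset f T, Lambda f T g

/-- The `(f,T)`-non-wandering set `Ω(f,T)`. -/
def OmegaSet (f : Circle1 → ℝ) (T : Circle1 → Circle1) : Set Circle1 :=
  {x | ∀ ε > (0 : ℝ), ∃ n : ℕ, 1 ≤ n ∧ ∃ z : Circle1, T^[n] z = x ∧ dist z x < ε ∧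
    |∑ i ∈ Finset.range n, (f (T^[i] z) - beta f T)| < ε}

/-- `A` is a periodic orbit of `T`. -/
def IsPeriodicOrbit (T : Circle1 → Circle1) (A : Set Circle1) : Prop :=
  ∃ x : Circle1, (∃ n : ℕ, 0 < n ∧ T^[n] x = x) ∧ A = Set.range fun k : ℕ => T^[k] x

/-- `A` is a `T`-minimal set: a nonempty compact invariant set with no proper nonempty
compact invariant subset. -/
def IsMinimalSet (T : Circle1 → Circle1) (A : Set Circle1) : Prop :=
  A.Nonempty ∧ IsCompact A ∧ T '' A ⊆ A ∧
    ∀ B ⊆ A, B.Nonempty → IsCompact B → T '' B ⊆ B → B = A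

/-- The space of `C^r` families of functions on the circle with `q` parameters,
i.e. maps `(t,x) ↦ f_t(x)` that are jointly `C^r` (the circle variable via a lift). -/
def FamFun (r : ℕ∞) (q : ℕ) : Type :=
  {G : ((Fin q → ℝ) × ℝ) → ℝ // ContDiff ℝ r G ∧ ∀ t x, G (t, x + 1) = G (t, x)}

noncomputable def famSeq (r : ℕ∞) (q : ℕ) (G : ((Fin q → ℝ) × ℝ) → ℝ) :
    (k : ℕ) → (((Fin q → ℝ) × ℝ) →ᵤ (((Fin q → ℝ) × ℝ) [×k]→L[ℝ] ℝ)) :=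
  fun k => UniformFun.ofFun (if (k : ℕ∞) ≤ r then iteratedFDeriv ℝ k G else 0)

/-- The `C^r` topology on the space of `C^r` families. -/
noncomputable instance (r : ℕ∞) (q : ℕ) : TopologicalSpace (FamFun r q) :=
  TopologicalSpace.induced (fun G : FamFun r q => famSeq r q G.1) inferInstance

/-- The member `f_t : ℝ/ℤ → ℝ` of a family, at the parameter `t`. -/
noncomputable def famMem {r : ℕ∞} {q : ℕ} (G : FamFun r q) (t : Fin q → ℝ) : Circle1 → ℝ :=
  fun z => G.1 (t, rep z)

/-- The product `m_∞` over `ℕ` of Lebesgue measure on `[0,1]`, realised as the pushforward of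
the Haar probability measure of the compact group `(ℝ/ℤ)^ℕ` under the coordinatewise choice of
representatives in `[0,1)`. -/
noncomputable def mInfty : Measure (ℕ → ℝ) :=
  Measure.map (fun (t : ℕ → Circle1) (n : ℕ) => rep (t n))
    (MeasureTheory.Measure.addHaarMeasure (⊤ : TopologicalSpace.PositiveCompacts (ℕ → Circle1)))

/-- `S` is an `N`-dimensionally shy subset of a normed real vector space `V`. -/
def NDimShy {V : Type*} [NormedAddCommGroup V] [NormedSpace ℝ V] (N : ℕ) (S : Set V) : Prop :=
  ∃ φ : Fin N → V, ∀ f : V,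
    volume {t : Fin N → ℝ | (∀ i, t i ∈ Set.Icc (0 : ℝ) 1) ∧ f + ∑ i, t i • φ i ∈ S} = 0

/-- `S` is a finite dimensionally shy subset of a normed real vector space `V`. -/
def FinDimShy {V : Type*} [NormedAddCommGroup V] [NormedSpace ℝ V] (S : Set V) : Prop :=
  ∃ N : ℕ, 0 < N ∧ NDimShy N S

/-- `S` is a shy subset of `V`: there are a compactly supported Borel probability measure `μ`
on `V` and a Borel set `S̃ ⊇ S` all of whose translates are `μ`-null. -/
def IsShy {V : Type*} [NormedAddCommGroup V] [NormedSpace ℝ V] (S : Set V) : Prop :=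
  letI : MeasurableSpace V := borel V
  ∃ μ : Measure V, μ Set.univ = 1 ∧ (∃ K : Set V, IsCompact K ∧ μ K = 1) ∧
    ∃ St : Set V, MeasurableSet St ∧ S ⊆ St ∧
      ∀ v : V, μ ((fun x => x + v) ⁻¹' St) = 0

/-- `S` is a prevalent subset of `V`. -/
def IsPrevalent {V : Type*} [NormedAddCommGroup V] [NormedSpace ℝ V] (S : Set V) : Prop :=
  IsShy Sᶜ

/-- `F` is the (normalized) lift of an orientation-preserving real analytic expanding circle
map of degree `d` fixing `π(0)`. -/
def AnalyticExpandingLift (F : ℝ → ℝ) (d : ℕ) : Prop :=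
  (∀ x : ℝ, AnalyticAt ℝ F x) ∧ (∀ x : ℝ, F (x + 1) = F x + d) ∧ StrictMono F ∧ F 0 = 0 ∧
    2 ≤ d ∧ ∃ C > (0 : ℝ), ∃ l > (1 : ℝ), ∀ n : ℕ, 1 ≤ n → ∀ x : ℝ, C * l ^ n ≤ |deriv (F^[n]) x|

/-- The inverse branches `τ_{i,n} = τ_{i_n} ∘ ⋯ ∘ τ_{i_1}`, where `τ = F⁻¹` and
`τ_i(x) = τ(x+i)`; the word `i` is indexed from `0`, so `i 0` is the first letter `i_1`. -/
noncomputable def tauIter (F : ℝ → ℝ) {d : ℕ} (i : ℕ → Fin d) : ℕ → ℝ → ℝ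
  | 0, x => x
  | n + 1, x => Function.invFun F (tauIter F i n x + ((i n : ℕ) : ℝ))

/-- The function `h^f_i` associated to an infinite word `i`. -/
noncomputable def hSum (F : ℝ → ℝ) {d : ℕ} (i : ℕ → Fin d) (f : Circle1 → ℝ) : ℝ → ℝ :=
  fun x => ∑' n : ℕ,
    (f ((tauIter F i (n + 1) x : ℝ) : Circle1) - f ((tauIter F i (n + 1) 0 : ℝ) : Circle1))

/-- The function `h^f_i` associated to a finite word of length `m` (the first `m` letters
of `i`). -/
noncomputable def hSumFin (F : ℝ → ℝ) {d : ℕ} (i : ℕ → Fin d) (m : ℕ) (f : Circle1 → ℝ) :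
    ℝ → ℝ :=
  fun x => ∑ n ∈ Finset.range m,
    (f ((tauIter F i (n + 1) x : ℝ) : Circle1) - f ((tauIter F i (n + 1) 0 : ℝ) : Circle1))

/-- `i ∈ CL(x,K)`: all backward images of `x` along the word `i` lie over `K`. -/
def WordIn (F : ℝ → ℝ) {d : ℕ} (i : ℕ → Fin d) (x : ℝ) (K : Set Circle1) : Prop :=
  ∀ n : ℕ, 1 ≤ n → ((tauIter F i n x : ℝ) : Circle1) ∈ K

/-- `x` (a real, lying over `K`) is an `f`-supercritical value of `K`. -/
def IsSupercriticalValue (F : ℝ → ℝ) (d : ℕ) (f : Circle1 → ℝ) (K : Set Circle1) (x : ℝ) :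
    Prop :=
  ((x : ℝ) : Circle1) ∈ K ∧ ∃ i j : ℕ → Fin d, WordIn F i x K ∧ WordIn F j x K ∧ i 0 ≠ j 0 ∧
    deriv (hSum F i f) x = deriv (hSum F j f) x

/-- `x` is a critical value of `T|K`. -/
def IsCriticalValue (T : Circle1 → Circle1) (K : Set Circle1) (x : Circle1) : Prop :=
  x ∈ K ∧ ∃ y z, y ∈ K ∧ z ∈ K ∧ y ≠ z ∧ T y = x ∧ T z = x

/-- A critical value `x` of `T|K` is regular: on each side of `x` there is a continuous
inverse branch of `T` selecting the unique preimage in `K`. -/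
def IsRegularCriticalValue (T : Circle1 → Circle1) (K : Set Circle1) (x : Circle1) : Prop :=
  ∃ U : Set Circle1, U ∈ 𝓝 x ∧ IsConnected U ∧
    ∀ b ∈ U \ {x}, ∃ s : Circle1 → Circle1,
      ContinuousOn s (connectedComponentIn (U \ {x}) b) ∧
      (∀ y ∈ connectedComponentIn (U \ {x}) b, T (s y) = y) ∧
      (∀ y ∈ K ∩ connectedComponentIn (U \ {x}) b, T ⁻¹' {y} ∩ K = {s y})

/-- `T|K` is Sturmian-like: every critical value is regular. -/
def SturmianLike (T : Circle1 → Circle1) (K : Set Circle1) : Prop :=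
  ∀ x, IsCriticalValue T K x → IsRegularCriticalValue T K x

/-- `f : ℝ/ℤ → ℝ` is a trigonometric polynomial. -/
def IsTrigPoly (f : Circle1 → ℝ) : Prop :=
  ∃ m : ℕ, ∃ a b : ℕ → ℝ, ∀ x : ℝ,
    f ↑x = a 0 + ∑ k ∈ Finset.range m,
      (a (k + 1) * Real.cos (2 * Real.pi * (k + 1) * x) +
        b (k + 1) * Real.sin (2 * Real.pi * (k + 1) * x))

end


/-! ### The circle and its lifts -/

theorem coe_rep (z : Circle1) : (rep z : Circle1) = z :=
  AddCircle.coe_equivIco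

theorem apply_rep_coe {α : Type*} {φ : ℝ → α} (hφ : Function.Periodic φ 1) (x : ℝ) :
    φ (rep (x : Circle1)) = φ x := by
  rw [← hφ.lift_coe, coe_rep, hφ.lift_coe]

theorem coe_eq_coe_iff {a b : ℝ} : (a : Circle1) = b ↔ ∃ m : ℤ, a = b + m := by
  rw [← sub_eq_zero, ← AddCircle.coe_sub, AddCircle.coe_eq_zero_iff]
  simp only [zsmul_one, eq_comm (a := ((_ : ℤ) : ℝ)), sub_eq_iff_eq_add']

theorem continuous_circle_iff {X : Type*} [TopologicalSpace X] {g : Circle1 → X} :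
    Continuous g ↔ Continuous fun x : ℝ => g x :=
  (QuotientAddGroup.isQuotientMap_mk (N := AddSubgroup.zmultiples (1 : ℝ))).continuous_iff

theorem dist_coe_le (x y : ℝ) : dist (x : Circle1) y ≤ |x - y| := by
  rw [dist_eq_norm, ← AddCircle.coe_sub, ← Real.norm_eq_abs]
  exact QuotientAddGroup.norm_mk_le_norm

theorem exists_coe_eq_and_abs_sub_eq_dist (x : ℝ) (b : Circle1) :
    ∃ y : ℝ, (y : Circle1) = b ∧ |x - y| = dist (x : Circle1) b := by
  refine ⟨rep b + round (x - rep b), ?_, ?_⟩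
  · rw [coe_eq_coe_iff.2 ⟨_, rfl⟩, coe_rep]
  · conv_rhs => rw [← coe_rep b, dist_eq_norm, ← AddCircle.coe_sub, UnitAddCircle.norm_eq]
    rw [sub_sub]

theorem lipschitzWith_of_lipschitzWith_coe {K : NNReal} {g : Circle1 → ℝ}
    (h : LipschitzWith K fun x : ℝ => g x) : LipschitzWith K g := by
  refine LipschitzWith.of_dist_le_mul fun a b => ?_
  obtain ⟨y, rfl, hy⟩ := exists_coe_eq_and_abs_sub_eq_dist (rep a) b
  simpa only [Real.dist_eq, hy, coe_rep] using h.dist_le_mul (rep a) y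

/-- `F` is a lift of a degree `k` self-map of `ℝ/ℤ`. Negative degrees, that is maps reversing the
orientation, are allowed. -/
def IsLiftOfDegree (F : ℝ → ℝ) (k : ℤ) : Prop :=
  ∀ x, F (x + 1) = F x + k

namespace IsLiftOfDegree

variable {F : ℝ → ℝ} {k : ℤ}

theorem add_int (hk : IsLiftOfDegree F k) (x : ℝ) (m : ℤ) : F (x + m) = F x + m * k :=
  calc F (x + m) = F x + m • (k : ℝ) := AddConstMapClass.map_add_int' (AddConstMap.mk F hk) x m
    _ = F x + m * k := by rw [zsmul_eq_mul]

theorem iterate (hk : IsLiftOfDegree F k) (n : ℕ) : IsLiftOfDegree F^[n] (k ^ n) := by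
  induction n with
  | zero => simp [IsLiftOfDegree]
  | succ n ih =>
    intro x
    rw [Function.iterate_succ_apply', ih, hk.add_int, Function.iterate_succ_apply']
    push_cast
    ring

theorem periodic_deriv (hk : IsLiftOfDegree F k) : Function.Periodic (deriv F) 1 := by
  intro x
  rw [← deriv_comp_add_const, funext hk, deriv_add_const]

theorem surjective (hk : IsLiftOfDegree F k) (hF : Continuous F) (hk0 : k ≠ 0) :
    Function.Surjective F := by
  intro y
  obtain ⟨m, hm⟩ := exists_nat_ge |y - F 0|
  have hbound := abs_le.1 hm
  have hpos := hk.add_int 0 (k * m)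
  have hneg := hk.add_int 0 (-(k * m))
  have hkk : (1 : ℝ) ≤ k * k := by exact_mod_cast Int.add_one_le_of_lt (mul_self_pos.2 hk0)
  have hkm : (m : ℝ) ≤ k * k * m := le_mul_of_one_le_left m.cast_nonneg hkk
  push_cast at hpos hneg
  exact mem_range_of_exists_le_of_exists_ge hF ⟨_, by rw [hneg]; linarith⟩
    ⟨_, by rw [hpos]; linarith⟩

theorem cmap_coe (hk : IsLiftOfDegree F k) (x : ℝ) : cmap F x = (F x : Circle1) := by
  refine apply_rep_coe (φ := fun t => (F t : Circle1)) (fun t => ?_) x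
  exact coe_eq_coe_iff.2 ⟨k, hk t⟩

theorem continuous_cmap (hk : IsLiftOfDegree F k) (hF : Continuous F) : Continuous (cmap F) := by
  simp_rw [continuous_circle_iff, hk.cmap_coe]
  exact (AddCircle.continuous_mk' 1).comp hF

theorem isLocallyInjective_cmap (hk : IsLiftOfDegree F k) (hF : Continuous F)
    (hinj : Function.Injective F) : IsLocallyInjective (cmap F) := by
  intro z
  let I : Set ℝ := {u | |F u - F (rep z)| < 1 / 2}
  have hI : IsOpen I := isOpen_lt (by fun_prop) continuous_const
  refine ⟨((↑) : ℝ → Circle1) '' I, QuotientAddGroup.isOpenMap_coe _ hI,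
    ⟨rep z, by simp [I], coe_rep z⟩, ?_⟩
  rintro _ ⟨u, hu, rfl⟩ _ ⟨v, hv, rfl⟩ huv
  rw [hk.cmap_coe, hk.cmap_coe] at huv
  obtain ⟨m, hm⟩ := coe_eq_coe_iff.1 huv
  have hm1 : |(m : ℝ)| < 1 := by
    rw [show (m : ℝ) = (F u - F (rep z)) - (F v - F (rep z)) by linarith]
    exact (abs_sub _ _).trans_lt (by linarith [mem_ofPred.1 hu, mem_ofPred.1 hv])
  have hm0 : m = 0 := Int.abs_lt_one_iff.1 (by exact_mod_cast hm1)
  rw [hinj (a₁ := u) (a₂ := v) (by simpa [hm0] using hm)]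

end IsLiftOfDegree

/-! ### Inverse branches and backward orbits of expanding maps -/

theorem injective_of_deriv_ne_zero {φ : ℝ → ℝ} (h : ∀ x, deriv φ x ≠ 0) :
    Function.Injective φ := by
  intro a b hab
  by_contra hne
  wlog hlt : a < b generalizing a b
  · exact this hab.symm (Ne.symm hne) (lt_of_le_of_ne (not_lt.1 hlt) (Ne.symm hne))
  have hφ : Continuous φ :=
    continuous_iff_continuousAt.2 fun x => (differentiableAt_of_deriv_ne_zero (h x)).continuousAt
  obtain ⟨c, -, hc⟩ := exists_deriv_eq_zero hlt hφ.continuousOn hab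
  exact h c hc

namespace ExpandingLift

variable {F : ℝ → ℝ} {k : ℤ}

theorem continuous (hF : ExpandingLift 1 F) : Continuous F :=
  hF.1.continuous

theorem contDiff_iterate (hF : ExpandingLift 1 F) (n : ℕ) : ContDiff ℝ 1 F^[n] := by
  induction n with
  | zero => exact contDiff_id
  | succ n ih => exact ih.comp hF.1

theorem deriv_iterate_ne_zero (hF : ExpandingLift 1 F) (n : ℕ) (x : ℝ) : deriv F^[n] x ≠ 0 := by
  obtain ⟨-, -, C, hC, l, hl, hexp⟩ := hF
  rcases n.eq_zero_or_pos with rfl | hn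
  · simp
  · exact abs_pos.1 ((by positivity : 0 < C * l ^ n).trans_le (hexp n hn x))

theorem exists_summable_abs_inv_deriv_iterate_le (hF : ExpandingLift 1 F) :
    ∃ c : ℕ → ℝ, Summable c ∧ ∀ n x, |(deriv F^[n] x)⁻¹| ≤ c n := by
  obtain ⟨-, -, C, hC, l, hl, hexp⟩ := hF
  have hl0 : 0 < l := zero_lt_one.trans hl
  refine ⟨fun n => (1 + C⁻¹) * l⁻¹ ^ n,
    (summable_geometric_of_lt_one (inv_nonneg.2 hl0.le) (inv_lt_one_of_one_lt₀ hl)).mul_left _,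
    fun n x => ?_⟩
  rcases n.eq_zero_or_pos with rfl | hn
  · simpa using hC.le
  calc |(deriv F^[n] x)⁻¹| = |deriv F^[n] x|⁻¹ := abs_inv _
    _ ≤ (C * l ^ n)⁻¹ := inv_anti₀ (by positivity) (hexp n hn x)
    _ = C⁻¹ * l⁻¹ ^ n := by rw [mul_inv, inv_pow]
    _ ≤ (1 + C⁻¹) * l⁻¹ ^ n := by gcongr; linarith

theorem injective (hF : ExpandingLift 1 F) : Function.Injective F :=
  injective_of_deriv_ne_zero (hF.deriv_iterate_ne_zero 1)

theorem degree_ne_zero (hF : ExpandingLift 1 F) (hk : IsLiftOfDegree F k) : k ≠ 0 := by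
  rintro rfl
  exact zero_ne_one (hF.injective (by simpa using (hk 0).symm))

theorem surjective (hF : ExpandingLift 1 F) : Function.Surjective F := by
  obtain ⟨k, hk : IsLiftOfDegree F k⟩ := hF.2.1
  exact hk.surjective hF.continuous (hF.degree_ne_zero hk)

theorem apply_invFun (hF : ExpandingLift 1 F) (y : ℝ) : F (Function.invFun F y) = y :=
  Function.rightInverse_invFun hF.surjective y

section InverseBranches

variable {d : ℕ} (i : ℕ → Fin d)

theorem exists_iterate_tauIter_eq_add (hF : ExpandingLift 1 F) (n : ℕ) :
    ∃ N, ∀ x, F^[n] (tauIter F i n x) = x + N := by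
  obtain ⟨k, hk : IsLiftOfDegree F k⟩ := hF.2.1
  induction n with
  | zero => exact ⟨0, fun x => (add_zero x).symm⟩
  | succ n ih =>
    obtain ⟨N, hN⟩ := ih
    refine ⟨N + (i n : ℤ) * ↑(k ^ n), fun x => ?_⟩
    rw [Function.iterate_succ_apply, tauIter, hF.apply_invFun, ← Int.cast_natCast (i n : ℕ),
      (hk.iterate n).add_int, hN, add_assoc]

theorem hasDerivAt_tauIter (hF : ExpandingLift 1 F) (n : ℕ) (x : ℝ) :
    HasDerivAt (tauIter F i n) (deriv F^[n] (tauIter F i n x))⁻¹ x := by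
  obtain ⟨N, hN⟩ := hF.exists_iterate_tauIter_eq_add i n
  have hstrict : HasStrictDerivAt (fun y => F^[n] y - N) (deriv F^[n] (tauIter F i n x))
      (tauIter F i n x) :=
    ((hF.contDiff_iterate n).contDiffAt.hasStrictDerivAt one_ne_zero).sub_const N
  have hinv : ∀ y, tauIter F i n (F^[n] y - N) = y := fun y =>
    hF.injective.iterate n (by rw [hN, sub_add_cancel])
  have h := hstrict.to_local_left_inverse (hF.deriv_iterate_ne_zero n _)
    (Eventually.of_forall hinv)
  rw [hN, add_sub_cancel_right] at h
  exact h.hasDerivAt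

theorem abs_tauIter_sub_le (hF : ExpandingLift 1 F) {c : ℕ → ℝ}
    (hc : ∀ n x, |(deriv F^[n] x)⁻¹| ≤ c n) (n : ℕ) (x y : ℝ) :
    |tauIter F i n x - tauIter F i n y| ≤ c n * |x - y| :=
  convex_univ.norm_image_sub_le_of_norm_hasDerivWithin_le
    (fun z _ => (hF.hasDerivAt_tauIter i n z).hasDerivWithinAt) (fun _ _ => hc n _)
    (mem_univ y) (mem_univ x)

theorem cmap_tauIter_succ (hF : ExpandingLift 1 F) (n : ℕ) (x : ℝ) :
    cmap F (tauIter F i (n + 1) x) = (tauIter F i n x : Circle1) := by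
  obtain ⟨k, hk : IsLiftOfDegree F k⟩ := hF.2.1
  rw [hk.cmap_coe, tauIter, hF.apply_invFun]
  exact coe_eq_coe_iff.2 ⟨(i n : ℕ), by simp⟩

end InverseBranches

theorem exists_branch (hF : ExpandingLift 1 F) (hk : IsLiftOfDegree F k) {t : ℝ} {y : Circle1}
    (hy : cmap F y = t) :
    ∃ a : Fin k.natAbs, ((Function.invFun F (t + (a : ℕ)) : ℝ) : Circle1) = y := by
  have hk0 := hF.degree_ne_zero hk
  obtain ⟨m, hm⟩ := coe_eq_coe_iff.1 (show (F (rep y) : Circle1) = t from hy)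
  have hnonneg := Int.emod_nonneg m hk0
  have hlt := (Int.emod_lt_abs m hk0).trans_eq (Int.natCast_natAbs k).symm
  refine ⟨⟨(m % k).toNat, by omega⟩, ?_⟩
  have hmod : ((m % k).toNat : ℝ) = m + (-(m / k) : ℤ) * k := by
    rw [← Int.cast_natCast, Int.toNat_of_nonneg hnonneg, Int.emod_def]
    push_cast
    ring
  have hlift : Function.invFun F (t + ((m % k).toNat : ℝ)) = rep y + (-(m / k) : ℤ) := by
    apply hF.injective
    rw [hF.apply_invFun, hk.add_int, hm, hmod, add_assoc]
  rw [hlift, coe_eq_coe_iff.2 ⟨_, rfl⟩, coe_rep]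

theorem injective_branch (hF : ExpandingLift 1 F) (hk : IsLiftOfDegree F k) (x : ℝ) :
    Function.Injective fun a : Fin k.natAbs =>
      ((Function.invFun F (x + (a : ℕ)) : ℝ) : Circle1) := by
  intro a b hab
  obtain ⟨m, hm⟩ := coe_eq_coe_iff.1 hab
  have hF_eq := congrArg F hm
  rw [hF.apply_invFun, hk.add_int, hF.apply_invFun] at hF_eq
  have hdvd : k ∣ (a : ℤ) - b := ⟨m, by
    have : (a : ℝ) - b = k * m := by linarith
    exact_mod_cast this⟩
  have := Int.eq_zero_of_abs_lt_dvd (Int.natAbs_dvd.2 hdvd) (abs_lt.2 (by omega))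
  exact Fin.ext (by omega)

end ExpandingLift

/-- `Y 0, Y 1, …` is a backward orbit of `T`. -/
def IsBackwardOrbit {X : Type*} (T : X → X) (Y : ℕ → X) : Prop :=
  ∀ n, T (Y (n + 1)) = Y n

theorem ExpandingLift.exists_coding {F : ℝ → ℝ} {k : ℤ} (hF : ExpandingLift 1 F)
    (hk : IsLiftOfDegree F k) {Y : ℕ → Circle1} (hY : IsBackwardOrbit (cmap F) Y) {x : ℝ}
    (hx : (x : Circle1) = Y 0) :
    ∃ i : ℕ → Fin k.natAbs, ∀ n, (tauIter F i n x : Circle1) = Y n := by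
  have hbranch : ∀ n (t : ℝ), ∃ a : Fin k.natAbs, (t : Circle1) = Y n →
      ((Function.invFun F (t + (a : ℕ)) : ℝ) : Circle1) = Y (n + 1) := by
    intro n t
    have : NeZero k.natAbs := ⟨Int.natAbs_ne_zero.2 (hF.degree_ne_zero hk)⟩
    by_cases ht : (t : Circle1) = Y n
    · obtain ⟨a, ha⟩ := hF.exists_branch hk (t := t) ((hY n).trans ht.symm)
      exact ⟨a, fun _ => ha⟩
    · exact ⟨0, fun h => absurd h ht⟩
  choose a ha using hbranch
  let S : ℕ → ℝ := fun n => n.rec x fun n t => Function.invFun F (t + (a n t : ℕ))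
  have hS : ∀ n, tauIter F (fun n => a n (S n)) n x = S n := by
    intro n
    induction n with
    | zero => rfl
    | succ n ih => rw [tauIter, ih]
  refine ⟨fun n => a n (S n), fun n => ?_⟩
  rw [hS]
  induction n with
  | zero => exact hx
  | succ n ih => exact ha n _ ih

/-- From every base point one can follow any given backward orbit `Y` of `T`, the distance at time
`n` being at most `c n` times the distance of the base points. This is the form in which the
expansion of `T` bounds the Lipschitz constants of calibrated sub-actions. -/
def ShadowsBackwardOrbits {X : Type*} [PseudoMetricSpace X] (T : X → X) (c : ℕ → ℝ) : Prop :=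
  ∀ Y, IsBackwardOrbit T Y → ∀ b, ∃ Z, IsBackwardOrbit T Z ∧ Z 0 = b ∧
    ∀ n, dist (Y n) (Z n) ≤ c n * dist (Y 0) b

theorem ExpandingLift.shadowsBackwardOrbits {F : ℝ → ℝ} (hF : ExpandingLift 1 F) {c : ℕ → ℝ}
    (hc : ∀ n x, |(deriv F^[n] x)⁻¹| ≤ c n) : ShadowsBackwardOrbits (cmap F) c := by
  intro Y hY b
  obtain ⟨k, hk : IsLiftOfDegree F k⟩ := hF.2.1
  obtain ⟨i, hi⟩ := hF.exists_coding hk hY (coe_rep (Y 0))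
  obtain ⟨y, rfl, hdist⟩ := exists_coe_eq_and_abs_sub_eq_dist (rep (Y 0)) b
  refine ⟨fun n => tauIter F i n y, fun n => hF.cmap_tauIter_succ i n y, rfl, fun n => ?_⟩
  calc dist (Y n) (tauIter F i n y) ≤ |tauIter F i n (rep (Y 0)) - tauIter F i n y| := by
        rw [← hi n]
        exact dist_coe_le _ _
    _ ≤ c n * |rep (Y 0) - y| := hF.abs_tauIter_sub_le i hc n _ _
    _ = c n * dist (Y 0) (y : Circle1) := by rw [hdist, coe_rep]

/-! ### Lipschitz constants of calibrated sub-actions -/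

theorem le_tsum_of_le_succ_add {u v : ℕ → ℝ} (huv : ∀ n, u n ≤ u (n + 1) + v n)
    (hu : Tendsto u atTop (𝓝 0)) (hv : Summable v) : u 0 ≤ ∑' n, v n := by
  have hpartial : ∀ n, u 0 ≤ u n + ∑ m ∈ Finset.range n, v m := by
    intro n
    induction n with
    | zero => simp
    | succ n ih =>
      rw [Finset.sum_range_succ]
      linarith [huv n]
  simpa using ge_of_tendsto' (hu.add hv.hasSum.tendsto_sum_nat) hpartial

theorem IsCalibrated.exists_backwardOrbit {f g : Circle1 → ℝ} {T : Circle1 → Circle1}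
    (hg : IsCalibrated f T g) (a : Circle1) :
    ∃ Y, IsBackwardOrbit T Y ∧ Y 0 = a ∧
      ∀ n, g (Y (n + 1)) + f (Y (n + 1)) = g (Y n) + beta f T := by
  choose S hTS hS using hg.2
  refine ⟨fun n => S^[n] a, fun n => ?_, rfl, fun n => ?_⟩
  · simp only [Function.iterate_succ_apply', hTS]
  · simp only [Function.iterate_succ_apply', hS]

theorem ShadowsBackwardOrbits.lipschitzWith_of_mem_gset {T : Circle1 → Circle1} {c : ℕ → ℝ}
    (hT : ShadowsBackwardOrbits T c) (hc : Summable c) {f g : Circle1 → ℝ} {M : NNReal}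
    (hf : LipschitzWith M f) (hg : g ∈ Gset f T) :
    LipschitzWith (M * (∑' n, c (n + 1)).toNNReal) g := by
  -- Along a calibrated backward orbit `Y` of `a` and the orbit `Z` shadowing it from `b`, the
  -- differences `g (Y n) - g (Z n)` tend to `0`, and the step from `n` to `n + 1` decreases them by
  -- at most `f (Y (n + 1)) - f (Z (n + 1))`.
  obtain ⟨⟨K, hK⟩, hcal⟩ := hg
  refine LipschitzWith.of_le_add_mul _ fun a b => ?_
  obtain ⟨Y, hY, rfl, hYg⟩ := hcal.exists_backwardOrbit a
  obtain ⟨Z, hZ, rfl, hYZ⟩ := hT Y hY b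
  have hstep : ∀ n, g (Y n) - g (Z n) ≤
      g (Y (n + 1)) - g (Z (n + 1)) + M * (c (n + 1) * dist (Y 0) (Z 0)) := by
    intro n
    have hsub := hcal.1.2 (Z (n + 1))
    rw [hZ n] at hsub
    have hfYZ := (hf.le_add_mul (Y (n + 1)) (Z (n + 1))).trans
      (add_le_add_right (mul_le_mul_of_nonneg_left (hYZ (n + 1)) M.coe_nonneg) _)
    linarith [hYg n]
  have hvanish : Tendsto (fun n => g (Y n) - g (Z n)) atTop (𝓝 0) := by
    refine squeeze_zero_norm (fun n => (hK.dist_le_mul _ _).trans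
      (mul_le_mul_of_nonneg_left (hYZ n) K.coe_nonneg)) ?_
    simpa using (hc.tendsto_atTop_zero.mul_const (dist (Y 0) (Z 0))).const_mul (K : ℝ)
  have hc' : Summable fun n => c (n + 1) := (summable_nat_add_iff 1).2 hc
  have htsum := le_tsum_of_le_succ_add hstep hvanish ((hc'.mul_right _).mul_left _)
  rw [tsum_mul_left, tsum_mul_right, ← mul_assoc] at htsum
  calc g (Y 0) ≤ g (Z 0) + M * (∑' n, c (n + 1)) * dist (Y 0) (Z 0) := by linarith
    _ ≤ g (Z 0) + ↑(M * (∑' n, c (n + 1)).toNNReal) * dist (Y 0) (Z 0) := by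
      rw [NNReal.coe_mul]
      gcongr
      exact Real.le_coe_toNNReal _

theorem lipschitzWith_one_beta (T : Circle1 → Circle1) :
    LipschitzWith 1 fun f : C(Circle1, ℝ) => beta f T := by
  refine LipschitzWith.of_le_add fun f g => ?_
  have hint : ∀ (h : C(Circle1, ℝ)) {μ : Measure Circle1}, InvProb T μ → Integrable h μ := by
    intro h μ hμ
    have := hμ.1
    exact h.continuous.integrable_of_hasCompactSupport (HasCompactSupport.of_compactSpace _)
  have hbound : ∀ (h : C(Circle1, ℝ)) {μ : Measure Circle1}, InvProb T μ →
      ∫ x, h x ∂μ ≤ ‖h‖ := by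
    intro h μ hμ
    have := hμ.1
    simpa using (le_abs_self _).trans (norm_integral_le_of_norm_le_const (μ := μ)
      (Eventually.of_forall h.norm_coe_le_norm))
  rcases {μ | InvProb T μ}.eq_empty_or_nonempty with hempty | hne
  · simp [beta, hempty]
  refine csSup_le (hne.image _) ?_
  rintro _ ⟨μ, hμ, rfl⟩
  have hbdd : BddAbove ((fun μ : Measure Circle1 => ∫ x, g x ∂μ) '' {μ | InvProb T μ}) :=
    ⟨‖g‖, forall_mem_image.2 fun _ => hbound g⟩
  calc ∫ x, f x ∂μ = ∫ x, g x ∂μ + ∫ x, (f - g) x ∂μ := by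
        rw [← integral_add (hint g hμ) (hint (f - g) hμ)]
        simp
    _ ≤ beta g T + dist f g := by
        rw [dist_eq_norm]
        exact add_le_add (le_csSup hbdd (mem_image_of_mem _ hμ)) (hbound (f - g) hμ)

/-! ### The space `𝓒^1` -/

/-- The derivative of the lift `φ`, as a function on the circle. It is meaningful when that
derivative is `1`-periodic. -/
noncomputable def circleDeriv (φ : ℝ → ℝ) : Circle1 → ℝ :=
  fun z => deriv φ (rep z)

theorem IsLiftOfDegree.circleDeriv_coe {φ : ℝ → ℝ} {k : ℤ} (hφ : IsLiftOfDegree φ k) (x : ℝ) :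
    circleDeriv φ x = deriv φ x :=
  apply_rep_coe hφ.periodic_deriv x

theorem IsLiftOfDegree.continuous_circleDeriv {φ : ℝ → ℝ} {k : ℤ} (hφ : IsLiftOfDegree φ k)
    (hφ1 : ContDiff ℝ 1 φ) : Continuous (circleDeriv φ) := by
  simpa only [continuous_circle_iff, hφ.circleDeriv_coe] using hφ1.continuous_deriv_one

theorem isLiftOfDegree_zero (f : Circle1 → ℝ) : IsLiftOfDegree (fun x => f x) 0 := by
  simp [IsLiftOfDegree]

theorem continuous_of_continuous_ofFun_coe {W : Type*} [TopologicalSpace W] {Φ : W → C(Circle1, ℝ)}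
    (hΦ : Continuous fun w => (UniformFun.ofFun fun x : ℝ => Φ w x : ℝ →ᵤ ℝ)) : Continuous Φ := by
  refine continuous_iff_continuousAt.2 fun w => ?_
  have h := UniformFun.tendsto_iff_tendstoUniformly.1 (hΦ.tendsto w)
  refine ContinuousMap.tendsto_iff_tendstoUniformly.2 ?_
  simpa only [Function.comp_def, UniformFun.toFun_ofFun, coe_rep] using h.comp rep

namespace CrFun

variable {r : ℕ∞}

theorem continuous_ofFun_iteratedDeriv {n : ℕ} (hn : (n : ℕ∞) ≤ r) :
    Continuous fun f : CrFun r =>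
      (UniformFun.ofFun (iteratedDeriv n fun x : ℝ => f.1 x) : ℝ →ᵤ ℝ) := by
  have h : Continuous fun f : CrFun r => crSeq r (fun x : ℝ => f.1 x) n :=
    (continuous_apply n).comp
      (continuous_induced_dom (f := fun f : CrFun r => crSeq r fun x : ℝ => f.1 x))
  simpa only [crSeq, if_pos hn] using h

/-- The inclusion of `𝓒^r` in the space of continuous functions on the circle. -/
def toContinuousMap (f : CrFun r) : C(Circle1, ℝ) :=
  ⟨f.1, continuous_circle_iff.2 f.2.continuous⟩

theorem continuous_toContinuousMap : Continuous (toContinuousMap : CrFun r → C(Circle1, ℝ)) :=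
  continuous_of_continuous_ofFun_coe (by
    simpa only [toContinuousMap, ContinuousMap.coe_mk, iteratedDeriv_zero] using
      continuous_ofFun_iteratedDeriv (r := r) (n := 0) (by simp))

/-- The derivative `f ↦ f'` from `𝓒^1` to the space of continuous functions on the circle. -/
noncomputable def derivMap (f : CrFun 1) : C(Circle1, ℝ) :=
  ⟨circleDeriv fun x => f.1 x, (isLiftOfDegree_zero f.1).continuous_circleDeriv f.2⟩

theorem derivMap_coe (f : CrFun 1) (x : ℝ) : f.derivMap x = deriv (fun x : ℝ => f.1 x) x :=
  (isLiftOfDegree_zero f.1).circleDeriv_coe x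

theorem continuous_derivMap : Continuous derivMap :=
  continuous_of_continuous_ofFun_coe (by
    simpa only [derivMap_coe, iteratedDeriv_one] using
      continuous_ofFun_iteratedDeriv (r := 1) (n := 1) le_rfl)

theorem lipschitzWith (f : CrFun 1) : LipschitzWith ‖f.derivMap‖₊ f.1 := by
  refine lipschitzWith_of_lipschitzWith_coe
    (lipschitzWith_of_nnnorm_deriv_le (f.2.differentiable one_ne_zero) fun x => ?_)
  rw [← f.derivMap_coe]
  exact f.derivMap.norm_coe_le_norm x

end CrFun

/-! ### The graph of `K(f,T)` -/

theorem isClosed_setOfPred_exists {X Y : Type*} [TopologicalSpace X] [TopologicalSpace Y]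
    [CompactSpace Y] {P : X → Y → Prop} (hP : IsClosed {q : X × Y | P q.1 q.2}) :
    IsClosed {x | ∃ y, P x y} := by
  convert isClosedMap_fst_of_compactSpace _ hP using 1
  ext x
  simp

section ClosedGraphs

variable {T : Circle1 → Circle1}

theorem isClosed_setOfPred_mem_eset (hT : Continuous T) :
    IsClosed {p : (C(Circle1, ℝ) × C(Circle1, ℝ)) × Circle1 | p.2 ∈ Eset p.1.1 T p.1.2} := by
  have hβ := (lipschitzWith_one_beta T).continuous.comp
    (continuous_fst.comp continuous_fst (X := (C(Circle1, ℝ) × C(Circle1, ℝ)) × Circle1))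
  exact isClosed_eq (by fun_prop) (Continuous.add (by fun_prop) hβ)

theorem isClosed_setOfPred_mem_lambda (hT : Continuous T) :
    IsClosed {p : (C(Circle1, ℝ) × C(Circle1, ℝ)) × Circle1 | p.2 ∈ Lambda p.1.1 T p.1.2} := by
  have hStar : IsClosed
      {p : (C(Circle1, ℝ) × C(Circle1, ℝ)) × Circle1 | p.2 ∈ LambdaStar p.1.1 T p.1.2} := by
    simp only [LambdaStar, ofPred_forall, mem_iInter]
    exact isClosed_iInter fun n => (isClosed_setOfPred_mem_eset hT).preimage
      (continuous_id.prodMap (hT.iterate n))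
  simp only [Lambda, mem_iInter, ofPred_forall]
  refine isClosed_iInter fun n => isClosed_setOfPred_exists (IsClosed.inter ?_ ?_)
  · exact hStar.preimage (f := fun q : ((C(Circle1, ℝ) × C(Circle1, ℝ)) × Circle1) × Circle1 =>
      (q.1.1, q.2)) (by fun_prop)
  · exact isClosed_eq ((hT.iterate n).comp continuous_snd) (by fun_prop)

theorem isClosed_setOfPred_isCalibrated (hT : Continuous T) :
    IsClosed {p : C(Circle1, ℝ) × C(Circle1, ℝ) | IsCalibrated p.1 T p.2} := by
  have hβ := (lipschitzWith_one_beta T).continuous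
  simp only [IsCalibrated, IsSubaction, map_continuous, true_and, ofPred_and, ofPred_forall]
  refine (isClosed_iInter fun x => ?_).inter
    (isClosed_iInter fun x => isClosed_setOfPred_exists (IsClosed.inter ?_ ?_))
  · exact isClosed_le (by fun_prop) (Continuous.add (by fun_prop) (hβ.comp continuous_fst))
  · exact isClosed_eq (hT.comp continuous_snd) continuous_const
  · exact isClosed_eq (by fun_prop)
      (Continuous.add (by fun_prop) (hβ.comp (continuous_fst.comp continuous_fst)))

end ClosedGraphs

theorem isCompact_setOfPred_lipschitzWith_one {X : Type*} [PseudoMetricSpace X] [CompactSpace X]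
    (x₀ : X) : IsCompact {h : C(X, ℝ) | LipschitzWith 1 h ∧ h x₀ = 0} := by
  refine ArzelaAscoli.isCompact_of_equicontinuous _ ?_
    (LipschitzWith.uniformEquicontinuous _ 1 fun h => h.2.1).equicontinuous
  have himage : ContinuousMap.toFun '' {h : C(X, ℝ) | LipschitzWith 1 h ∧ h x₀ = 0} =
      {h : X → ℝ | LipschitzWith 1 h} ∩ {h | h x₀ = 0} := by
    ext h
    exact ⟨by rintro ⟨h, hh, rfl⟩; exact hh, fun hh => ⟨⟨h, hh.1.continuous⟩, hh, rfl⟩⟩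
  have hclosed : IsClosed ({h : X → ℝ | LipschitzWith 1 h} ∩ {h | h x₀ = 0}) :=
    (isClosed_setOfPred_lipschitzWith 1).inter
      (isClosed_eq (continuous_apply x₀) continuous_const)
  rw [himage]
  refine (isCompact_univ_pi fun x => isCompact_closedBall (0 : ℝ) (dist x x₀)).of_isClosed_subset
    hclosed ?_
  rintro h ⟨hlip, hx₀ : h x₀ = 0⟩ x -
  simpa [hx₀] using hlip.dist_le_mul x x₀

theorem exists_lipschitzWith_one_eq_add_mul {X : Type*} [PseudoMetricSpace X] {L : NNReal}
    {g : X → ℝ} (hg : LipschitzWith L g) (x₀ : X) :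
    ∃ a : ℝ, ∃ h : X → ℝ, LipschitzWith 1 h ∧ h x₀ = 0 ∧ g = fun x => a + L * h x := by
  refine ⟨g x₀, fun x => (L : ℝ)⁻¹ * (g x - g x₀), LipschitzWith.of_dist_le_mul fun x y => ?_,
    by simp, funext fun x => ?_⟩
  · calc dist ((L : ℝ)⁻¹ * (g x - g x₀)) ((L : ℝ)⁻¹ * (g y - g x₀))
        = (L : ℝ)⁻¹ * dist (g x) (g y) := by
          rw [Real.dist_eq, Real.dist_eq, ← mul_sub, sub_sub_sub_cancel_right, abs_mul,
            abs_of_nonneg (by positivity)]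
      _ ≤ (L : ℝ)⁻¹ * (L * dist x y) := by gcongr; exact hg.dist_le_mul x y
      _ ≤ 1 * dist x y := by rw [← mul_assoc]; gcongr; exact inv_mul_le_one
  · rcases eq_or_ne L 0 with rfl | hL
    · simpa [sub_eq_zero] using hg.dist_le_mul x x₀
    · field_simp
      ring

section AddConst

variable {f g : Circle1 → ℝ} {T : Circle1 → Circle1} (a : ℝ)

theorem isCalibrated_const_add_iff :
    IsCalibrated f T (fun x => a + g x) ↔ IsCalibrated f T g := by
  have hcont : Continuous (fun x => a + g x) ↔ Continuous g :=
    (Homeomorph.addLeft a).comp_continuous_iff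
  simp only [IsCalibrated, IsSubaction, add_assoc, add_le_add_iff_left, add_right_inj, hcont]

theorem lambda_const_add : Lambda f T (fun x => a + g x) = Lambda f T g := by
  simp only [Lambda, LambdaStar, Eset, add_assoc, add_right_inj]

end AddConst

theorem mem_kset_iff {f : Circle1 → ℝ} {T : Circle1 → Circle1} {L : NNReal}
    (hL : ∀ g ∈ Gset f T, LipschitzWith L g) {z : Circle1} :
    z ∈ Kset f T ↔ ∃ h : {h : C(Circle1, ℝ) | LipschitzWith 1 h ∧ h 0 = 0},
      IsCalibrated f T ⇑((L : ℝ) • h.1) ∧ z ∈ Lambda f T ⇑((L : ℝ) • h.1) := by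
  simp only [Kset, mem_iUnion, exists_prop]
  constructor
  · rintro ⟨g, hg, hz⟩
    obtain ⟨a, h, hlip, h0, rfl⟩ := exists_lipschitzWith_one_eq_add_mul (hL g hg) 0
    rw [lambda_const_add] at hz
    exact ⟨⟨⟨h, hlip.continuous⟩, hlip, h0⟩, (isCalibrated_const_add_iff a).1 hg.2, hz⟩
  · rintro ⟨h, hcal, hz⟩
    exact ⟨_, ⟨⟨_, (lipschitzWith_smul (L : ℝ)).comp h.2.1⟩, hcal⟩, hz⟩

theorem isClosed_setOfPred_mem_kset {T : Circle1 → Circle1} (hT : Continuous T) {W : Type*}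
    [TopologicalSpace W] {Φ : W → C(Circle1, ℝ)} (hΦ : Continuous Φ) {L : W → NNReal}
    (hLcont : Continuous L) (hL : ∀ w, ∀ g ∈ Gset (Φ w) T, LipschitzWith (L w) g) :
    IsClosed {p : W × Circle1 | p.2 ∈ Kset (Φ p.1) T} := by
  have := isCompact_iff_compactSpace.1 (isCompact_setOfPred_lipschitzWith_one (0 : Circle1))
  simp only [mem_kset_iff (hL _)]
  refine isClosed_setOfPred_exists (IsClosed.inter ?_ ?_)
  · exact (isClosed_setOfPred_isCalibrated hT).preimage
      (f := fun q : (W × Circle1) × {h : C(Circle1, ℝ) | LipschitzWith 1 h ∧ h 0 = 0} =>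
        (Φ q.1.1, (L q.1.1 : ℝ) • q.2.1)) (by fun_prop)
  · exact (isClosed_setOfPred_mem_lambda hT).preimage
      (f := fun q : (W × Circle1) × {h : C(Circle1, ℝ) | LipschitzWith 1 h ∧ h 0 = 0} =>
        ((Φ q.1.1, (L q.1.1 : ℝ) • q.2.1), q.1.2)) (by fun_prop)

theorem isClosed_setOfPred_mem_kset_cmap {F : ℝ → ℝ} (hF : ExpandingLift 1 F) :
    IsClosed {p : CrFun 1 × Circle1 | p.2 ∈ Kset p.1.1 (cmap F)} := by
  obtain ⟨k, hk : IsLiftOfDegree F k⟩ := hF.2.1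
  obtain ⟨c, hc, hFc⟩ := hF.exists_summable_abs_inv_deriv_iterate_le
  exact isClosed_setOfPred_mem_kset (Φ := CrFun.toContinuousMap) (hk.continuous_cmap hF.continuous)
    CrFun.continuous_toContinuousMap
    (CrFun.continuous_derivMap.nnnorm.mul_const (∑' n, c (n + 1)).toNNReal)
    fun f _ hg => (hF.shadowsBackwardOrbits hFc).lipschitzWith_of_mem_gset hc f.lipschitzWith hg

/-! ### Supercritical values -/

theorem isClosed_setOfPred_eq_and_ne {X Y : Type*} [TopologicalSpace X] [TopologicalSpace Y]
    [T2Space Y] {T : X → Y} (hT : Continuous T) (hinj : IsLocallyInjective T) :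
    IsClosed {p : X × X | T p.1 = T p.2 ∧ p.1 ≠ p.2} := by
  have hdiag := (isLocallyInjective_iff_isOpen_diagonal.1 hinj).isClosed_compl
  have hpullback : IsClosed {p : X × X | T p.1 = T p.2} := isClosed_eq (by fun_prop) (by fun_prop)
  convert hpullback.isClosedEmbedding_subtypeVal.isClosedMap _ hdiag using 1
  ext p
  exact ⟨fun ⟨h, hne⟩ => ⟨⟨p, h⟩, hne, rfl⟩, by rintro ⟨q, hne, rfl⟩; exact ⟨q.2, hne⟩⟩

theorem isClosed_setOfPred_isBackwardOrbit {X : Type*} [TopologicalSpace X] [T2Space X]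
    {T : X → X} (hT : Continuous T) : IsClosed {Y : ℕ → X | IsBackwardOrbit T Y} := by
  simp only [IsBackwardOrbit, ofPred_forall]
  exact isClosed_iInter fun n => isClosed_eq (by fun_prop) (by fun_prop)

/-- `Y` and `Z` are backward orbits of `T` from the same point which separate at the first step. -/
def AreForkedBackwardOrbits {X : Type*} (T : X → X) (Y Z : ℕ → X) : Prop :=
  IsBackwardOrbit T Y ∧ IsBackwardOrbit T Z ∧ Y 0 = Z 0 ∧ Y 1 ≠ Z 1

theorem isClosed_setOfPred_areForkedBackwardOrbits {X : Type*} [TopologicalSpace X] [T2Space X]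
    {T : X → X} (hT : Continuous T) (hinj : IsLocallyInjective T) :
    IsClosed {p : (ℕ → X) × (ℕ → X) | AreForkedBackwardOrbits T p.1 p.2} := by
  have horbit := isClosed_setOfPred_isBackwardOrbit hT
  have hfork : IsClosed {p : (ℕ → X) × (ℕ → X) | T (p.1 1) = T (p.2 1) ∧ p.1 1 ≠ p.2 1} :=
    (isClosed_setOfPred_eq_and_ne hT hinj).preimage
      (f := fun p : (ℕ → X) × (ℕ → X) => (p.1 1, p.2 1)) (by fun_prop)
  convert (horbit.prod horbit).inter hfork using 1
  ext ⟨Y, Z⟩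
  simp only [AreForkedBackwardOrbits, mem_ofPred_eq, mem_inter_iff, mem_prod, and_assoc]
  exact and_congr_right fun hY => and_congr_right fun hZ => by rw [hY 0, hZ 0]

/-- The series `∑ φ(y_n) / (Tⁿ)'(y_n)`, `n ≥ 1`, along a backward orbit `Y = (y_n)` of the circle
map `T` with lift `F`. For `φ = f'` its values are the derivatives of the functions `h^f_i`. -/
noncomputable def derivSeries (F : ℝ → ℝ) (φ : C(Circle1, ℝ)) (Y : ℕ → Circle1) : ℝ :=
  ∑' n, φ (Y (n + 1)) * (circleDeriv F^[n + 1] (Y (n + 1)))⁻¹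

theorem ExpandingLift.continuous_derivSeries {F : ℝ → ℝ} (hF : ExpandingLift 1 F) :
    Continuous fun p : C(Circle1, ℝ) × (ℕ → Circle1) => derivSeries F p.1 p.2 := by
  obtain ⟨k, hk : IsLiftOfDegree F k⟩ := hF.2.1
  obtain ⟨c, hc, hFc⟩ := hF.exists_summable_abs_inv_deriv_iterate_le
  have hterm : ∀ n, Continuous fun p : C(Circle1, ℝ) × (ℕ → Circle1) =>
      p.1 (p.2 (n + 1)) * (circleDeriv F^[n + 1] (p.2 (n + 1)))⁻¹ := by
    intro n
    have hderiv := ((hk.iterate (n + 1)).continuous_circleDeriv (hF.contDiff_iterate _)).inv₀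
      fun z => hF.deriv_iterate_ne_zero (n + 1) (rep z)
    exact Continuous.mul (by fun_prop) (hderiv.comp (by fun_prop))
  refine continuous_iff_continuousAt.2 fun p => ?_
  have hopen : IsOpen {q : C(Circle1, ℝ) × (ℕ → Circle1) | ‖q.1‖ < ‖p.1‖ + 1} :=
    isOpen_lt (by fun_prop) continuous_const
  refine (continuousOn_tsum (fun n => (hterm n).continuousOn)
    (((summable_nat_add_iff 1).2 hc).mul_left (‖p.1‖ + 1)) fun n q hq => ?_).continuousAt
    (hopen.mem_nhds (lt_add_one ‖p.1‖))
  rw [norm_mul]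
  exact mul_le_mul ((q.1.norm_coe_le_norm _).trans (le_of_lt hq)) (hFc _ _) (norm_nonneg _)
    (by positivity)

theorem ExpandingLift.deriv_hSum {F : ℝ → ℝ} (hF : ExpandingLift 1 F) {d : ℕ} (i : ℕ → Fin d)
    (f : CrFun 1) (x : ℝ) :
    deriv (hSum F i f.1) x =
      derivSeries F f.derivMap fun n => (tauIter F i n x : Circle1) := by
  obtain ⟨k, hk : IsLiftOfDegree F k⟩ := hF.2.1
  obtain ⟨c, hc, hFc⟩ := hF.exists_summable_abs_inv_deriv_iterate_le
  have hterm : ∀ n y, HasDerivAt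
      (fun y => f.1 (tauIter F i (n + 1) y : Circle1) - f.1 (tauIter F i (n + 1) 0 : Circle1))
      (deriv (fun x : ℝ => f.1 x) (tauIter F i (n + 1) y) *
        (deriv F^[n + 1] (tauIter F i (n + 1) y))⁻¹) y := fun n y =>
    ((f.2.differentiable one_ne_zero _).hasDerivAt.comp y
      (hF.hasDerivAt_tauIter i (n + 1) y)).sub_const _
  have hbound : ∀ n y, ‖deriv (fun x : ℝ => f.1 x) (tauIter F i (n + 1) y) *
      (deriv F^[n + 1] (tauIter F i (n + 1) y))⁻¹‖ ≤ ‖f.derivMap‖ * c (n + 1) := by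
    intro n y
    rw [norm_mul, ← f.derivMap_coe]
    exact mul_le_mul (f.derivMap.norm_coe_le_norm _) (hFc _ _) (norm_nonneg _) (norm_nonneg _)
  refine (hasDerivAt_tsum (y₀ := 0) (((summable_nat_add_iff 1).2 hc).mul_left _) hterm hbound
    (by simp) x).deriv.trans ?_
  simp only [derivSeries, f.derivMap_coe, (hk.iterate _).circleDeriv_coe]

theorem ExpandingLift.exists_isSupercriticalValue_iff {F : ℝ → ℝ} {k : ℤ} (hF : ExpandingLift 1 F)
    (hk : IsLiftOfDegree F k) (f : CrFun 1) {K : Set Circle1} :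
    (∃ x, IsSupercriticalValue F k.natAbs f.1 K x) ↔
      ∃ p : (ℕ → Circle1) × (ℕ → Circle1), AreForkedBackwardOrbits (cmap F) p.1 p.2 ∧
        (∀ n, p.1 n ∈ K) ∧ (∀ n, p.2 n ∈ K) ∧
        derivSeries F f.derivMap p.1 = derivSeries F f.derivMap p.2 := by
  constructor
  · rintro ⟨x, hx, i, j, hi, hj, hij, hderiv⟩
    have hmem : ∀ {i : ℕ → Fin k.natAbs}, WordIn F i x K →
        ∀ n, (tauIter F i n x : Circle1) ∈ K := by
      rintro i hi (_ | n)
      exacts [hx, hi _ n.succ_pos]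
    refine ⟨(fun n => tauIter F i n x, fun n => tauIter F j n x),
      ⟨fun n => hF.cmap_tauIter_succ i n x, fun n => hF.cmap_tauIter_succ j n x, rfl,
        (hF.injective_branch hk x).ne hij⟩, hmem hi, hmem hj, ?_⟩
    simpa only [hF.deriv_hSum] using hderiv
  · rintro ⟨p, ⟨hY, hZ, h0, h1⟩, hYK, hZK, hderiv⟩
    have hx := coe_rep (p.1 0)
    obtain ⟨i, hi⟩ := hF.exists_coding hk hY hx
    obtain ⟨j, hj⟩ := hF.exists_coding hk hZ (hx.trans h0)
    refine ⟨rep (p.1 0), hx.symm ▸ hYK 0, i, j, fun n _ => hi n ▸ hYK n, fun n _ => hj n ▸ hZK n,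
      fun hij => h1 ?_, ?_⟩
    · rw [← hi, ← hj, tauIter, tauIter, hij]
      rfl
    · simpa only [hF.deriv_hSum, hi, hj] using hderiv

theorem AnalyticExpandingLift.expandingLift {F : ℝ → ℝ} {d : ℕ} {r : ℕ∞}
    (hF : AnalyticExpandingLift F d) : ExpandingLift r F :=
  ⟨contDiff_iff_contDiffAt.2 fun x => (hF.1 x).contDiffAt, ⟨d, by simpa using hF.2.1⟩,
    hF.2.2.2.2.2⟩

theorem no_supercritical_open_general {F : ℝ → ℝ} {k : ℤ} (hF : ExpandingLift 1 F)
    (hk : IsLiftOfDegree F k) :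
    IsOpen {f : CrFun 1 |
      ¬ ∃ x, IsSupercriticalValue F k.natAbs f.1 (Kset f.1 (cmap F)) x} := by
  have hmem := isClosed_setOfPred_mem_kset_cmap hF
  simp only [hF.exists_isSupercriticalValue_iff hk]
  refine isOpen_compl_iff.2 (isClosed_setOfPred_exists ?_)
  simp only [ofPred_and, ofPred_forall]
  refine IsClosed.inter ?_ (IsClosed.inter ?_ (IsClosed.inter ?_ ?_))
  · exact (isClosed_setOfPred_areForkedBackwardOrbits (hk.continuous_cmap hF.continuous)
      (hk.isLocallyInjective_cmap hF.continuous hF.injective)).preimage continuous_snd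
  · exact isClosed_iInter fun n => hmem.preimage
      (f := fun q : CrFun 1 × (ℕ → Circle1) × (ℕ → Circle1) => (q.1, q.2.1 n)) (by fun_prop)
  · exact isClosed_iInter fun n => hmem.preimage
      (f := fun q : CrFun 1 × (ℕ → Circle1) × (ℕ → Circle1) => (q.1, q.2.2 n)) (by fun_prop)
  · have hderiv := CrFun.continuous_derivMap
    exact isClosed_eq
      (hF.continuous_derivSeries.comp
        (f := fun q : CrFun 1 × (ℕ → Circle1) × (ℕ → Circle1) => (q.1.derivMap, q.2.1))
        (by fun_prop))
      (hF.continuous_derivSeries.comp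
        (f := fun q : CrFun 1 × (ℕ → Circle1) × (ℕ → Circle1) => (q.1.derivMap, q.2.2))
        (by fun_prop))

/-- Proposition 3.7: having no supercritical value is an open property in `𝓒^1`: if
`f_n → f_0` in the `C^1` topology and every `f_n` has a supercritical value, then `f_0` has a
supercritical value. -/
theorem no_supercritical_open (F : ℝ → ℝ) (d : ℕ) (hF : AnalyticExpandingLift F d)
    (fseq : ℕ → CrFun 1) (f0 : CrFun 1) (hconv : Tendsto fseq atTop (𝓝 f0))
    (hsc : ∀ n, ∃ x : ℝ,
      IsSupercriticalValue F d (fseq n).1 (Kset (fseq n).1 (cmap F)) x) :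
    ∃ x : ℝ, IsSupercriticalValue F d f0.1 (Kset f0.1 (cmap F)) x := by
  by_contra h
  obtain ⟨n, hn⟩ :=
    (hconv.eventually ((no_supercritical_open_general (k := d) hF.expandingLift hF.2.1).mem_nhds
      h)).exists
  exact hn (hsc n)
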